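/- arXiv:1911.12140 — 3 statements merged into one kernel-verified Lean document; each statement's English description precedes it below -/
import Mathlib

section
/- Fix n ≥ 1 with i_n ≥ 1 and i_k = 0 for all k > n, and define the second representation (i'_k) of the same Q-rational number by i'_k = i_k for k < n, i'_n = i_n − 1, and i'_k = q_k − 1 for k > n. Then the generalized shift σ_n applied to the two representations gives different values, and the difference is σ_n(i) − σ_n(i') = −1/(q_1 q_2 ⋯ q_{n−1}). -/
/-- `q_1 q_2 ⋯ q_n` (1-based indexing; `prodQ q 0 = 1`). -/
noncomputable def prodQ (q : ℕ → ℕ) (n : ℕ) : ℝ :=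
  ∏ j ∈ Finset.Icc 1 n, (q j : ℝ)

/-- The positive Cantor series value `x = Σ_{n=1}^∞ i_n/(q_1 ⋯ q_n)`. -/
noncomputable def cantorVal (q i : ℕ → ℕ) : ℝ :=
  ∑' n : ℕ, (i (n + 1) : ℝ) / prodQ q (n + 1)

/-- The generalized shift operator
`σ_m = Σ_{k=1}^{m-1} i_k/(q_1⋯q_k) + Σ_{l=m+1}^∞ i_l/(q_1⋯q_{m-1} q_{m+1}⋯q_l)`. -/
noncomputable def sigmaC (q i : ℕ → ℕ) (m : ℕ) : ℝ :=
  (∑ k ∈ Finset.Icc 1 (m - 1), (i k : ℝ) / prodQ q k) +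
    ∑' t : ℕ, (i (m + 1 + t) : ℝ) /
      (prodQ q (m - 1) * ∏ j ∈ Finset.Icc (m + 1) (m + 1 + t), (q j : ℝ))

/-- The `m`-fold shift `σ^m(x) = Σ_{k=m+1}^∞ i_k/(q_{m+1} ⋯ q_k)`. -/
noncomputable def shiftVal (q i : ℕ → ℕ) (m : ℕ) : ℝ :=
  ∑' t : ℕ, (i (m + 1 + t) : ℝ) / ∏ j ∈ Finset.Icc (m + 1) (m + 1 + t), (q j : ℝ)

/-!
The operator `σ_n` skips the digit `i_n`, so it depends only on the digits before `n` and on the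
tail series `∑_{l > n} i_l / (q_{n+1} ⋯ q_l)`, scaled by `1 / (q_1 ⋯ q_{n-1})`. The two
representations agree before `n`, and their tails are all `0` and all `q_l - 1`. The first tail
series is `0`; the second telescopes through
`(q_l - 1) / (q_{n+1} ⋯ q_l) = 1 / (q_{n+1} ⋯ q_{l-1}) - 1 / (q_{n+1} ⋯ q_l)` to `1`,
because the products of the `q_j` tend to infinity.
-/

open Finset Filter

section Telescoping

theorem sum_range_sub_one_div_prod {K : Type*} [Field K] {a : ℕ → K} (ha : ∀ k, a k ≠ 0) (N : ℕ) :
    ∑ t ∈ range N, (a t - 1) / ∏ j ∈ range (t + 1), a j = 1 - (∏ j ∈ range N, a j)⁻¹ := by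
  have telescope (t : ℕ) : (a t - 1) / ∏ j ∈ range (t + 1), a j =
      (∏ j ∈ range t, a j)⁻¹ - (∏ j ∈ range (t + 1), a j)⁻¹ := by
    have hat := ha t
    have hprod : ∏ j ∈ range t, a j ≠ 0 := prod_ne_zero_iff.2 fun j _ => ha j
    rw [prod_range_succ]
    field_simp
  simp only [telescope, sum_range_sub' fun t => (∏ j ∈ range t, a j)⁻¹, prod_range_zero, inv_one]

theorem hasSum_sub_one_div_prod {a : ℕ → ℝ} (ha : ∀ k, 1 ≤ a k)
    (hprod : Tendsto (fun N => ∏ j ∈ range N, a j) atTop atTop) :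
    HasSum (fun t => (a t - 1) / ∏ j ∈ range (t + 1), a j) 1 := by
  have ha_pos (k : ℕ) : 0 < a k := zero_lt_one.trans_le (ha k)
  have hnonneg (t : ℕ) : 0 ≤ (a t - 1) / ∏ j ∈ range (t + 1), a j :=
    div_nonneg (sub_nonneg.2 (ha t)) (prod_nonneg fun j _ => (ha_pos j).le)
  rw [hasSum_iff_tendsto_nat_of_nonneg hnonneg]
  simpa only [sum_range_sub_one_div_prod fun k => (ha_pos k).ne', sub_zero, Pi.inv_apply] using
    hprod.inv_tendsto_atTop.const_sub 1

end Telescoping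

theorem prod_Icc_add_eq_prod_range {M : Type*} [CommMonoid M] (f : ℕ → M) (m t : ℕ) :
    ∏ j ∈ Icc m (m + t), f j = ∏ j ∈ range (t + 1), f (m + j) := by
  rw [← Ico_add_one_right_eq_Icc, prod_Ico_eq_prod_range, add_assoc, Nat.add_sub_cancel_left]

section BaseProducts

variable {q : ℕ → ℕ}

theorem prodQ_pos (hq : ∀ k, 1 ≤ k → 1 ≤ q k) (n : ℕ) : 0 < prodQ q n :=
  prod_pos fun j hj => Nat.cast_pos.2 (hq j (mem_Icc.1 hj).1)

theorem prodQ_add (q : ℕ → ℕ) (m t : ℕ) :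
    prodQ q (m + t) = prodQ q m * ∏ j ∈ range t, (q (m + 1 + j) : ℝ) := by
  have hlen : m + t + 1 - (m + 1) = t := by lia
  simp only [prodQ, ← Ico_add_one_right_eq_Icc]
  rw [← prod_Ico_consecutive _ (Nat.le_add_left 1 m) (by lia : m + 1 ≤ m + t + 1),
    prod_Ico_eq_prod_range _ (m + 1), hlen]

theorem tendsto_prodQ_atTop (hq : ∀ k, 1 ≤ k → 2 ≤ q k) : Tendsto (prodQ q) atTop atTop := by
  have two_pow_le (n : ℕ) : (2 : ℝ) ^ n ≤ prodQ q n := by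
    calc (2 : ℝ) ^ n = ∏ _j ∈ Icc 1 n, (2 : ℝ) := by simp
      _ ≤ prodQ q n := prod_le_prod (fun _ _ => zero_le_two) fun j hj =>
        Nat.ofNat_le_cast.2 (hq j (mem_Icc.1 hj).1)
  exact tendsto_atTop_mono two_pow_le (tendsto_pow_atTop_atTop_of_one_lt one_lt_two)

theorem tendsto_prod_range_add_atTop (hq : ∀ k, 1 ≤ k → 1 ≤ q k)
    (hprod : Tendsto (prodQ q) atTop atTop) (m : ℕ) :
    Tendsto (fun N => ∏ j ∈ range N, (q (m + 1 + j) : ℝ)) atTop atTop := by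
  rw [← tendsto_const_mul_atTop_of_pos (prodQ_pos hq m)]
  simp only [← prodQ_add]
  simpa only [add_comm m] using (tendsto_add_atTop_iff_nat m).2 hprod

end BaseProducts

section Shift

variable {q i i' : ℕ → ℕ} {m : ℕ}

theorem shiftVal_eq_zero (hi : ∀ k, m < k → i k = 0) : shiftVal q i m = 0 := by
  have hdigit (t : ℕ) : i (m + 1 + t) = 0 := hi _ (by lia)
  simp only [shiftVal, hdigit, Nat.cast_zero, zero_div, tsum_zero]

theorem shiftVal_eq_one (hq : ∀ k, 1 ≤ k → 1 ≤ q k) (hprod : Tendsto (prodQ q) atTop atTop)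
    (hi : ∀ k, m < k → i k = q k - 1) : shiftVal q i m = 1 := by
  have hbase (t : ℕ) : 1 ≤ q (m + 1 + t) := hq _ (by lia)
  have hdigit (t : ℕ) : (i (m + 1 + t) : ℝ) = q (m + 1 + t) - 1 := by
    rw [hi _ (by lia), Nat.cast_sub (hbase t), Nat.cast_one]
  simp only [shiftVal, hdigit, prod_Icc_add_eq_prod_range]
  exact (hasSum_sub_one_div_prod (fun t => Nat.one_le_cast.2 (hbase t))
    (tendsto_prod_range_add_atTop hq hprod m)).tsum_eq

theorem sigmaC_eq_sum_add_shiftVal_div (q i : ℕ → ℕ) (m : ℕ) :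
    sigmaC q i m = ∑ k ∈ Icc 1 (m - 1), (i k : ℝ) / prodQ q k +
      shiftVal q i m / prodQ q (m - 1) := by
  simp only [sigmaC, shiftVal, ← tsum_div_const, div_div, mul_comm (prodQ q (m - 1))]

theorem sigmaC_sub_sigmaC (h : ∀ k ∈ Icc 1 (m - 1), i k = i' k) :
    sigmaC q i m - sigmaC q i' m = (shiftVal q i m - shiftVal q i' m) / prodQ q (m - 1) := by
  have hprefix : ∑ k ∈ Icc 1 (m - 1), (i k : ℝ) / prodQ q k =
      ∑ k ∈ Icc 1 (m - 1), (i' k : ℝ) / prodQ q k :=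
    sum_congr rfl fun k hk => by rw [h k hk]
  rw [sigmaC_eq_sum_add_shiftVal_div, sigmaC_eq_sum_add_shiftVal_div, hprefix,
    add_sub_add_left_eq_sub, sub_div]

theorem stmt_8_general {n : ℕ} (hq : ∀ k, 1 ≤ k → 1 ≤ q k)
    (hprod : Tendsto (prodQ q) atTop atTop) (hagree : ∀ k ∈ Icc 1 n, i k = i' k)
    (hi : ∀ k, n + 1 < k → i k = 0) (hi' : ∀ k, n + 1 < k → i' k = q k - 1) :
    sigmaC q i (n + 1) ≠ sigmaC q i' (n + 1) ∧
      sigmaC q i (n + 1) - sigmaC q i' (n + 1) = -(1 / prodQ q n) := by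
  have jump : sigmaC q i (n + 1) - sigmaC q i' (n + 1) = -(1 / prodQ q n) := by
    rw [sigmaC_sub_sigmaC (m := n + 1) hagree, shiftVal_eq_zero hi, shiftVal_eq_one hq hprod hi',
      zero_sub, neg_div, Nat.add_sub_cancel]
  have jump_ne_zero : -(1 / prodQ q n) ≠ 0 :=
    neg_ne_zero.2 (one_div_pos.2 (prodQ_pos hq n)).ne'
  exact ⟨sub_ne_zero.1 (jump ▸ jump_ne_zero), jump⟩

end Shift

theorem stmt_8 (q i : ℕ → ℕ) (hq : ∀ n, 1 ≤ n → 2 ≤ q n)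
    (hi : ∀ n, 1 ≤ n → i n ≤ q n - 1) (n : ℕ) (hn : 1 ≤ n)
    (hin : 1 ≤ i n) (htail : ∀ k, n < k → i k = 0) :
    sigmaC q i n ≠
      sigmaC q (fun k => if k < n then i k else if k = n then i n - 1 else q k - 1) n ∧
    sigmaC q i n -
      sigmaC q (fun k => if k < n then i k else if k = n then i n - 1 else q k - 1) n =
        -(1 / prodQ q (n - 1)) := by
  obtain ⟨m, rfl⟩ := Nat.exists_eq_add_of_le' hn
  exact stmt_8_general (fun k hk => one_le_two.trans (hq k hk)) (tendsto_prodQ_atTop hq)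
    (fun k hk => (if_pos (Nat.lt_succ_of_le (mem_Icc.1 hk).2)).symm) htail
    fun k hk => by rw [if_neg hk.not_gt, if_neg hk.ne']
end

section
/- For every m ≥ 1, σ_m(x) = Σ_{k=1}^{m−1} (−1)^k i_k/(q_1 ⋯ q_k) + Σ_{l=m+1}^∞ (−1)^{l−1} i_l/(q_1 ⋯ q_{m−1} q_{m+1} ⋯ q_l) = −q_m·x + (1 + q_m)·Σ_{k=1}^{m−1} (−1)^k i_k/(q_1 q_2 ⋯ q_k) + (−1)^m i_m/(q_1 ⋯ q_{m−1}). -/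
/-- The alternating Cantor series value `x = Σ_{n=1}^∞ (-1)^n i_n/(q_1 ⋯ q_n)`. -/
noncomputable def altCantorVal (q i : ℕ → ℕ) : ℝ :=
  ∑' n : ℕ, (-1 : ℝ) ^ (n + 1) * (i (n + 1) : ℝ) / prodQ q (n + 1)

/-- The generalized shift operator for alternating Cantor series:
`σ_m = Σ_{k=1}^{m-1} (-1)^k i_k/(q_1⋯q_k)
      + Σ_{l=m+1}^∞ (-1)^{l-1} i_l/(q_1⋯q_{m-1} q_{m+1}⋯q_l)`. -/
noncomputable def altSigma (q i : ℕ → ℕ) (m : ℕ) : ℝ :=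
  (∑ k ∈ Finset.Icc 1 (m - 1), (-1 : ℝ) ^ k * (i k : ℝ) / prodQ q k) +
    ∑' t : ℕ, (-1 : ℝ) ^ (m + t) * (i (m + 1 + t) : ℝ) /
      (prodQ q (m - 1) * ∏ j ∈ Finset.Icc (m + 1) (m + 1 + t), (q j : ℝ))

/-!
The factors of `q_1 ⋯ q_{m-1} q_{m+1} ⋯ q_l` are those of `q_1 ⋯ q_l` with `q_m` left out, and the
sign `(-1)^{l-1}` is opposite to `(-1)^l`. Hence the tail of `σ_m(x)` is `-q_m` times the tail of
`x` beyond the index `m`, while `q_m` times the `m`-th term of `x` is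
`(-1)^m i_m / (q_1 ⋯ q_{m-1})`. It remains to split the series of `x` at `m`; it converges
absolutely because digits bounded by `q_n` make the terms `O(2^{-n})`.
-/

/-- The term `(-1)^n i_n / (q_1 ⋯ q_n)` of the alternating Cantor series. The series itself starts
at `n = 1`; the value `i_0` at `n = 0` does not belong to it. -/
noncomputable def altCantorTerm (q i : ℕ → ℕ) (n : ℕ) : ℝ :=
  (-1 : ℝ) ^ n * (i n : ℝ) / prodQ q n

theorem tsum_succ_eq_sum_Icc_add_tsum {G : Type*} [AddCommGroup G] [TopologicalSpace G]
    [IsTopologicalAddGroup G] [T2Space G] {f : ℕ → G} (hf : Summable f) (m : ℕ) :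
    ∑' n, f (n + 1) = ∑ k ∈ Finset.Icc 1 m, f k + ∑' t, f (m + 1 + t) := by
  have hsum : ∑ n ∈ Finset.range m, f (n + 1) = ∑ k ∈ Finset.Icc 1 m, f k := by
    rw [Finset.range_eq_Ico, Finset.sum_Ico_add', zero_add, Finset.Ico_add_one_right_eq_Icc]
  have htail (t : ℕ) : f (t + m + 1) = f (m + 1 + t) := congrArg f (by ring)
  rw [← ((summable_nat_add_iff 1).2 hf).sum_add_tsum_nat_add m, hsum, tsum_congr htail]

theorem prodQ_nonneg (q : ℕ → ℕ) (n : ℕ) : 0 ≤ prodQ q n :=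
  Finset.prod_nonneg fun j _ ↦ (q j).cast_nonneg

theorem prodQ_succ (q : ℕ → ℕ) (n : ℕ) : prodQ q (n + 1) = prodQ q n * q (n + 1) :=
  Finset.prod_Icc_succ_top n.succ_pos _

theorem prodQ_mul_prod_Icc (q : ℕ → ℕ) {m n : ℕ} (hmn : m ≤ n) :
    prodQ q m * ∏ j ∈ Finset.Icc (m + 1) n, (q j : ℝ) = prodQ q n := by
  simpa only [prodQ, ← Finset.Icc_add_one_left_eq_Ioc, zero_add] using
    Finset.prod_Ioc_consecutive (fun j ↦ (q j : ℝ)) m.zero_le hmn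

section

variable {q i : ℕ → ℕ}

theorem two_pow_le_prodQ (hq : ∀ n, 1 ≤ n → 2 ≤ q n) (n : ℕ) : (2 : ℝ) ^ n ≤ prodQ q n := by
  have hprod : ∏ _j ∈ Finset.Icc 1 n, (2 : ℝ) ≤ prodQ q n :=
    Finset.prod_le_prod (fun _ _ ↦ zero_le_two)
      fun j hj ↦ Nat.ofNat_le_cast.2 (hq j (Finset.mem_Icc.1 hj).1)
  simpa using hprod

theorem abs_altCantorTerm_succ_le {n : ℕ} (hi : i (n + 1) ≤ q (n + 1)) :
    |altCantorTerm q i (n + 1)| ≤ (prodQ q n)⁻¹ := by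
  have hdigit : (i (n + 1) : ℝ) / q (n + 1) ≤ 1 :=
    div_le_one_of_le₀ (Nat.cast_le.2 hi) (Nat.cast_nonneg _)
  calc |altCantorTerm q i (n + 1)|
      = (i (n + 1) : ℝ) / prodQ q (n + 1) := by
        rw [altCantorTerm, abs_div, abs_mul, abs_neg_one_pow, one_mul, Nat.abs_cast,
          abs_of_nonneg (prodQ_nonneg q _)]
    _ = (prodQ q n)⁻¹ * ((i (n + 1) : ℝ) / q (n + 1)) := by
        rw [prodQ_succ, div_mul_eq_div_div_swap, div_eq_inv_mul]
    _ ≤ (prodQ q n)⁻¹ := mul_le_of_le_one_right (inv_nonneg.2 (prodQ_nonneg q n)) hdigit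

theorem summable_altCantorTerm (hq : ∀ n, 1 ≤ n → 2 ≤ q n) (hi : ∀ n, 1 ≤ n → i n ≤ q n) :
    Summable (altCantorTerm q i) := by
  refine (summable_nat_add_iff 1).1 (summable_geometric_two.of_norm_bounded fun n ↦ ?_)
  calc |altCantorTerm q i (n + 1)|
      ≤ (prodQ q n)⁻¹ := abs_altCantorTerm_succ_le (hi _ n.succ_pos)
    _ ≤ ((2 : ℝ) ^ n)⁻¹ := inv_anti₀ (by positivity) (two_pow_le_prodQ hq n)
    _ = (1 / 2 : ℝ) ^ n := by rw [one_div, inv_pow]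

theorem mul_altCantorTerm_succ {n : ℕ} (hq : q (n + 1) ≠ 0) :
    (q (n + 1) : ℝ) * altCantorTerm q i (n + 1) =
      (-1 : ℝ) ^ (n + 1) * (i (n + 1) : ℝ) / prodQ q n := by
  rw [altCantorTerm, prodQ_succ, mul_comm (prodQ q n), ← mul_div_assoc,
    mul_div_mul_left _ _ (Nat.cast_ne_zero.2 hq)]

theorem neg_mul_altCantorTerm_succ_add {n : ℕ} (hq : q (n + 1) ≠ 0) (t : ℕ) :
    -(q (n + 1) : ℝ) * altCantorTerm q i (n + 1 + 1 + t) =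
      (-1 : ℝ) ^ (n + 1 + t) * (i (n + 1 + 1 + t) : ℝ) /
        (prodQ q n * ∏ j ∈ Finset.Icc (n + 1 + 1) (n + 1 + 1 + t), (q j : ℝ)) := by
  have hprod : prodQ q (n + 1 + 1 + t) =
      q (n + 1) * (prodQ q n * ∏ j ∈ Finset.Icc (n + 1 + 1) (n + 1 + 1 + t), (q j : ℝ)) := by
    rw [← prodQ_mul_prod_Icc q (by lia : n + 1 ≤ n + 1 + 1 + t), prodQ_succ]
    ring
  have hsign : (-1 : ℝ) ^ (n + 1 + 1 + t) = -(-1) ^ (n + 1 + t) := by ring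
  rw [altCantorTerm, hprod, hsign, ← mul_div_assoc, neg_mul, neg_mul, mul_neg, neg_neg,
    mul_div_mul_left _ _ (Nat.cast_ne_zero.2 hq)]

theorem altSigma_succ_eq_sum_sub_mul_tsum {n : ℕ} (hq : q (n + 1) ≠ 0) :
    altSigma q i (n + 1) = ∑ k ∈ Finset.Icc 1 n, altCantorTerm q i k -
      q (n + 1) * ∑' t, altCantorTerm q i (n + 1 + 1 + t) := by
  rw [sub_eq_add_neg, ← neg_mul, ← tsum_mul_left,
    tsum_congr (neg_mul_altCantorTerm_succ_add hq)]
  rfl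

theorem altCantorVal_eq_sum_add_tsum (hs : Summable (altCantorTerm q i)) (n : ℕ) :
    altCantorVal q i = ∑ k ∈ Finset.Icc 1 n, altCantorTerm q i k + altCantorTerm q i (n + 1) +
      ∑' t, altCantorTerm q i (n + 1 + 1 + t) := by
  rw [← Finset.sum_Icc_succ_top n.succ_pos]
  exact tsum_succ_eq_sum_Icc_add_tsum hs (n + 1)

end

theorem stmt_11_general (q i : ℕ → ℕ) (hq : ∀ n, 1 ≤ n → q n ≠ 0)
    (hs : Summable (altCantorTerm q i)) (m : ℕ) (hm : 1 ≤ m) :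
    altSigma q i m =
      -(q m : ℝ) * altCantorVal q i +
        (1 + (q m : ℝ)) * (∑ k ∈ Finset.Icc 1 (m - 1), (-1 : ℝ) ^ k * (i k : ℝ) / prodQ q k) +
        (-1 : ℝ) ^ m * (i m : ℝ) / prodQ q (m - 1) := by
  obtain ⟨n, rfl⟩ := Nat.exists_eq_add_of_le' hm
  have hqm : q (n + 1) ≠ 0 := hq _ hm
  change altSigma q i (n + 1) = -(q (n + 1) : ℝ) * altCantorVal q i +
    (1 + (q (n + 1) : ℝ)) * (∑ k ∈ Finset.Icc 1 n, altCantorTerm q i k) +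
    (-1 : ℝ) ^ (n + 1) * (i (n + 1) : ℝ) / prodQ q n
  rw [altSigma_succ_eq_sum_sub_mul_tsum hqm, altCantorVal_eq_sum_add_tsum hs n,
    ← mul_altCantorTerm_succ hqm]
  ring

theorem stmt_11 (q i : ℕ → ℕ) (hq : ∀ n, 1 ≤ n → 2 ≤ q n)
    (hi : ∀ n, 1 ≤ n → i n ≤ q n - 1) (m : ℕ) (hm : 1 ≤ m) :
    altSigma q i m =
      -(q m : ℝ) * altCantorVal q i +
        (1 + (q m : ℝ)) * (∑ k ∈ Finset.Icc 1 (m - 1), (-1 : ℝ) ^ k * (i k : ℝ) / prodQ q k) +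
        (-1 : ℝ) ^ m * (i m : ℝ) / prodQ q (m - 1) :=
  stmt_11_general q i (fun n hn ↦ (zero_lt_two.trans_le (hq n hn)).ne')
    (summable_altCantorTerm hq fun n hn ↦ (hi n hn).trans (Nat.sub_le _ _)) m hm
end

section
/- For every m ≥ 1, σ_m(x) = x/q_{i_m,m} − ((−1)^{ρ_m} a_{i_m,m}/q_{i_m,m})·∏_{j=1}^{m−1} q_{i_j,j} + (1 − 1/q_{i_m,m})·( (−1)^{ρ_1} a_{i_1,1} + Σ_{n=2}^{m−1} (−1)^{ρ_n} a_{i_n,n} ∏_{j=1}^{n−1} q_{i_j,j} ). -/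
/-- `a_{d,n} = Σ_{t=0}^{d-1} q_{t,n}` (so `a_{0,n} = 0`). -/
noncomputable def aQt (qt : ℕ → ℕ → ℝ) (d n : ℕ) : ℝ :=
  ∑ t ∈ Finset.range d, qt t n

/-- `∏_{j=1}^{n} q_{i_j,j}` (1-based indexing; `prodQt qt i 0 = 1`). -/
noncomputable def prodQt (qt : ℕ → ℕ → ℝ) (i : ℕ → ℕ) (n : ℕ) : ℝ :=
  ∏ j ∈ Finset.Icc 1 n, qt (i j) j

/-- The positive `Q̃`-expansion value
`x = a_{i_1,1} + Σ_{n=2}^∞ a_{i_n,n} ∏_{j=1}^{n-1} q_{i_j,j}`. -/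
noncomputable def qtVal (qt : ℕ → ℕ → ℝ) (i : ℕ → ℕ) : ℝ :=
  aQt qt (i 1) 1 + ∑' t : ℕ, aQt qt (i (t + 2)) (t + 2) * prodQt qt i (t + 1)

/-- The generalized shift operator for `Q̃`-expansions:
`σ_m = a_{i_1,1} + Σ_{n=2}^{m-1} a_{i_n,n} ∏_{j=1}^{n-1} q_{i_j,j}
      + Σ_{l=m+1}^∞ a_{i_l,l} ∏_{j=1, j≠m}^{l-1} q_{i_j,j}`
(the first two summands form the partial sum `Σ_{n=1}^{m-1}`, empty when `m = 1`). -/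
noncomputable def qtSigma (qt : ℕ → ℕ → ℝ) (i : ℕ → ℕ) (m : ℕ) : ℝ :=
  (∑ n ∈ Finset.Icc 1 (m - 1), aQt qt (i n) n * prodQt qt i (n - 1)) +
    ∑' t : ℕ, aQt qt (i (m + 1 + t)) (m + 1 + t) *
      (prodQt qt i (m - 1) * ∏ j ∈ Finset.Icc (m + 1) (m + t), qt (i j) j)

/-- `σ^m(x) = Σ_{l=m+1}^∞ a_{i_l,l} ∏_{j=m+1}^{l-1} q_{i_j,j}`. -/
noncomputable def qtShift (qt : ℕ → ℕ → ℝ) (i : ℕ → ℕ) (m : ℕ) : ℝ :=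
  ∑' t : ℕ, aQt qt (i (m + 1 + t)) (m + 1 + t) * ∏ j ∈ Finset.Icc (m + 1) (m + t), qt (i j) j

-- `(-1)^{ρ_n}` where `ρ_n = 1` if `n ∈ N_B` and `ρ_n = 2` otherwise.
open Classical in
noncomputable def sgn (NB : Set ℕ) (n : ℕ) : ℝ := if n ∈ NB then -1 else 1

/-- The sign-variable `Q̃`-expansion value
`x = (-1)^{ρ_1} a_{i_1,1} + Σ_{n=2}^∞ (-1)^{ρ_n} a_{i_n,n} ∏_{j=1}^{n-1} q_{i_j,j}`. -/
noncomputable def svQtVal (NB : Set ℕ) (qt : ℕ → ℕ → ℝ) (i : ℕ → ℕ) : ℝ :=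
  sgn NB 1 * aQt qt (i 1) 1 +
    ∑' t : ℕ, sgn NB (t + 2) * aQt qt (i (t + 2)) (t + 2) * prodQt qt i (t + 1)

/-- The generalized shift operator for sign-variable `Q̃`-expansions:
`σ_m = Σ_{n=1}^{m-1} (-1)^{ρ_n} a_{i_n,n} ∏_{j=1}^{n-1} q_{i_j,j}
      + Σ_{l=m+1}^∞ (-1)^{ρ_l} a_{i_l,l} ∏_{j=1, j≠m}^{l-1} q_{i_j,j}`. -/
noncomputable def svQtSigma (NB : Set ℕ) (qt : ℕ → ℕ → ℝ) (i : ℕ → ℕ) (m : ℕ) : ℝ :=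
  (∑ n ∈ Finset.Icc 1 (m - 1), sgn NB n * aQt qt (i n) n * prodQt qt i (n - 1)) +
    ∑' t : ℕ, sgn NB (m + 1 + t) * aQt qt (i (m + 1 + t)) (m + 1 + t) *
      (prodQt qt i (m - 1) * ∏ j ∈ Finset.Icc (m + 1) (m + t), qt (i j) j)

/-!
Write `S_m` for the `m`-th partial sum of the expansion of `x`. Every product in the tail `x - S_m`
contains the factor `q_{i_m,m}`, and deleting that factor is all that `σ_m` does to the tail, so
`q_{i_m,m} (σ_m(x) - S_{m-1}) = x - S_m`; solving for `σ_m(x)` gives the formula. The expansion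
converges absolutely because `a_{i_n,n} ≤ 1 - q_{i_n,n}`, which bounds the sum of the absolute
values by a telescoping one.
-/

section Weights

variable {qt : ℕ → ℕ → ℝ} {i : ℕ → ℕ}

theorem aQt_succ (qt : ℕ → ℕ → ℝ) (d n : ℕ) : aQt qt (d + 1) n = aQt qt d n + qt d n :=
  Finset.sum_range_succ _ _

theorem aQt_mono {d e n : ℕ} (hde : d ≤ e) (hnonneg : ∀ t < e, 0 ≤ qt t n) :
    aQt qt d n ≤ aQt qt e n :=
  Finset.sum_le_sum_of_subset_of_nonneg (Finset.range_mono hde) fun t ht _ =>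
    hnonneg t (Finset.mem_range.mp ht)

theorem aQt_nonneg {d n : ℕ} (hnonneg : ∀ t < d, 0 ≤ qt t n) : 0 ≤ aQt qt d n :=
  Finset.sum_nonneg fun t ht => hnonneg t (Finset.mem_range.mp ht)

theorem prodQt_zero (qt : ℕ → ℕ → ℝ) (i : ℕ → ℕ) : prodQt qt i 0 = 1 :=
  rfl

theorem prodQt_succ (qt : ℕ → ℕ → ℝ) (i : ℕ → ℕ) (n : ℕ) :
    prodQt qt i (n + 1) = prodQt qt i n * qt (i (n + 1)) (n + 1) :=
  Finset.prod_Icc_succ_top (Nat.le_add_left 1 n) _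

theorem prodQt_add (qt : ℕ → ℕ → ℝ) (i : ℕ → ℕ) (m t : ℕ) :
    prodQt qt i (m + t) = prodQt qt i m * ∏ j ∈ Finset.Icc (m + 1) (m + t), qt (i j) j := by
  simp only [prodQt, ← Finset.Ico_add_one_right_eq_Icc]
  exact (Finset.prod_Ico_consecutive _ (Nat.le_add_left 1 m) (by lia)).symm

theorem prodQt_nonneg (hnonneg : ∀ n, 1 ≤ n → 0 ≤ qt (i n) n) (n : ℕ) : 0 ≤ prodQt qt i n :=
  Finset.prod_nonneg fun j hj => hnonneg j (Finset.mem_Icc.mp hj).1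

theorem sum_range_aQt_mul_prodQt_le (hnonneg : ∀ n, 1 ≤ n → 0 ≤ qt (i n) n)
    (hle : ∀ n, 1 ≤ n → aQt qt (i n + 1) n ≤ 1) (N : ℕ) :
    ∑ n ∈ Finset.range N, aQt qt (i (n + 1)) (n + 1) * prodQt qt i n ≤ 1 - prodQt qt i N := by
  induction N with
  | zero => simp [prodQt_zero]
  | succ N ih =>
    have hgap : aQt qt (i (N + 1)) (N + 1) ≤ 1 - qt (i (N + 1)) (N + 1) := by
      linarith [hle (N + 1) (Nat.le_add_left 1 N), aQt_succ qt (i (N + 1)) (N + 1)]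
    calc ∑ n ∈ Finset.range (N + 1), aQt qt (i (n + 1)) (n + 1) * prodQt qt i n
        ≤ (1 - prodQt qt i N) + (1 - qt (i (N + 1)) (N + 1)) * prodQt qt i N := by
          rw [Finset.sum_range_succ]
          exact add_le_add ih (mul_le_mul_of_nonneg_right hgap (prodQt_nonneg hnonneg N))
      _ = 1 - prodQt qt i (N + 1) := by rw [prodQt_succ]; ring

theorem summable_aQt_mul_prodQt (hnonneg : ∀ n, 1 ≤ n → ∀ d ≤ i n, 0 ≤ qt d n)
    (hle : ∀ n, 1 ≤ n → aQt qt (i n + 1) n ≤ 1) :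
    Summable fun n => aQt qt (i (n + 1)) (n + 1) * prodQt qt i n := by
  have hdigit (n : ℕ) (hn : 1 ≤ n) : 0 ≤ qt (i n) n := hnonneg n hn (i n) le_rfl
  have hprod (n : ℕ) : 0 ≤ prodQt qt i n := prodQt_nonneg hdigit n
  refine summable_of_sum_range_le (c := 1) (fun n => mul_nonneg ?_ (hprod n)) fun N => ?_
  · exact aQt_nonneg fun t ht => hnonneg (n + 1) (Nat.le_add_left 1 n) t ht.le
  · exact (sum_range_aQt_mul_prodQt_le hdigit hle N).trans (sub_le_self 1 (hprod N))

end Weights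

theorem abs_sgn (NB : Set ℕ) (n : ℕ) : |sgn NB n| = 1 := by
  unfold sgn
  split_ifs <;> simp

/-- The `n`-th term `(-1)^{ρ_n} a_{i_n,n} ∏_{j=1}^{n-1} q_{i_j,j}` of a sign-variable
`Q̃`-expansion. Indices start at `1`; the value at `n = 0` is meaningless. -/
noncomputable def svQtTerm (NB : Set ℕ) (qt : ℕ → ℕ → ℝ) (i : ℕ → ℕ) (n : ℕ) : ℝ :=
  sgn NB n * aQt qt (i n) n * prodQt qt i (n - 1)

/-- The partial sum `S_m` of the first `m` terms of a sign-variable `Q̃`-expansion. -/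
noncomputable def svQtPartialSum (NB : Set ℕ) (qt : ℕ → ℕ → ℝ) (i : ℕ → ℕ) (m : ℕ) : ℝ :=
  ∑ n ∈ Finset.Icc 1 m, svQtTerm NB qt i n

section Expansion

variable {NB : Set ℕ} {qt : ℕ → ℕ → ℝ} {i : ℕ → ℕ} {m : ℕ}

theorem abs_svQtTerm (NB : Set ℕ) (qt : ℕ → ℕ → ℝ) (i : ℕ → ℕ) (n : ℕ) :
    |svQtTerm NB qt i n| = |aQt qt (i n) n * prodQt qt i (n - 1)| := by
  rw [svQtTerm, mul_assoc, abs_mul, abs_sgn, one_mul]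

theorem summable_svQtTerm (hnonneg : ∀ n, 1 ≤ n → ∀ d ≤ i n, 0 ≤ qt d n)
    (hle : ∀ n, 1 ≤ n → aQt qt (i n + 1) n ≤ 1) :
    Summable fun n => svQtTerm NB qt i (n + 1) := by
  refine Summable.of_abs ?_
  simpa only [abs_svQtTerm, Nat.add_sub_cancel] using (summable_aQt_mul_prodQt hnonneg hle).abs

theorem svQtPartialSum_eq_sum_range (NB : Set ℕ) (qt : ℕ → ℕ → ℝ) (i : ℕ → ℕ) (m : ℕ) :
    svQtPartialSum NB qt i m = ∑ n ∈ Finset.range m, svQtTerm NB qt i (n + 1) := by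
  rw [svQtPartialSum, Finset.range_eq_Ico, Finset.sum_Ico_add', zero_add,
    Finset.Ico_add_one_right_eq_Icc]

theorem svQtPartialSum_of_pos (hm : 1 ≤ m) :
    svQtPartialSum NB qt i m = svQtPartialSum NB qt i (m - 1) + svQtTerm NB qt i m := by
  obtain ⟨k, rfl⟩ := Nat.exists_eq_add_of_le' hm
  exact Finset.sum_Icc_succ_top hm _

theorem svQtVal_eq_tsum (hsummable : Summable fun n => svQtTerm NB qt i (n + 1)) :
    svQtVal NB qt i = ∑' n, svQtTerm NB qt i (n + 1) := by
  rw [hsummable.tsum_eq_zero_add]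
  simp [svQtVal, svQtTerm, prodQt_zero]

theorem tsum_svQtTerm_eq_svQtVal_sub (hsummable : Summable fun n => svQtTerm NB qt i (n + 1))
    (m : ℕ) :
    ∑' t, svQtTerm NB qt i (m + 1 + t) = svQtVal NB qt i - svQtPartialSum NB qt i m := by
  rw [svQtVal_eq_tsum hsummable, svQtPartialSum_eq_sum_range, eq_sub_iff_add_eq',
    ← hsummable.sum_add_tsum_nat_add m]
  exact congrArg _ (tsum_congr fun t => by rw [Nat.add_right_comm, Nat.add_comm m])

theorem svQtTerm_add_eq_mul (NB : Set ℕ) (qt : ℕ → ℕ → ℝ) (i : ℕ → ℕ) (hm : 1 ≤ m) (t : ℕ) :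
    svQtTerm NB qt i (m + 1 + t) =
      qt (i m) m * (sgn NB (m + 1 + t) * aQt qt (i (m + 1 + t)) (m + 1 + t) *
        (prodQt qt i (m - 1) * ∏ j ∈ Finset.Icc (m + 1) (m + t), qt (i j) j)) := by
  obtain ⟨k, rfl⟩ := Nat.exists_eq_add_of_le' hm
  rw [svQtTerm, Nat.add_right_comm, Nat.add_sub_cancel, prodQt_add, prodQt_succ,
    Nat.add_sub_cancel]
  ring

theorem qt_mul_svQtSigma_sub_svQtPartialSum
    (hsummable : Summable fun n => svQtTerm NB qt i (n + 1)) (hm : 1 ≤ m) :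
    qt (i m) m * (svQtSigma NB qt i m - svQtPartialSum NB qt i (m - 1)) =
      svQtVal NB qt i - svQtPartialSum NB qt i m := by
  rw [← tsum_svQtTerm_eq_svQtVal_sub hsummable, tsum_congr (svQtTerm_add_eq_mul NB qt i hm),
    tsum_mul_left]
  exact congrArg _ (add_sub_cancel_left _ _)

end Expansion

theorem stmt_18_general (NB : Set ℕ) (qt : ℕ → ℕ → ℝ) (i : ℕ → ℕ)
    (hsummable : Summable fun n => svQtTerm NB qt i (n + 1)) (m : ℕ) (hm : 1 ≤ m)
    (hq : qt (i m) m ≠ 0) :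
    svQtSigma NB qt i m =
      svQtVal NB qt i / qt (i m) m -
        sgn NB m * aQt qt (i m) m / qt (i m) m * prodQt qt i (m - 1) +
        (1 - 1 / qt (i m) m) *
          (∑ n ∈ Finset.Icc 1 (m - 1), sgn NB n * aQt qt (i n) n * prodQt qt i (n - 1)) := by
  change _ = _ + (1 - 1 / qt (i m) m) * svQtPartialSum NB qt i (m - 1)
  have htail := qt_mul_svQtSigma_sub_svQtPartialSum hsummable hm
  rw [svQtPartialSum_of_pos hm, svQtTerm] at htail
  field_simp
  linear_combination htail

theorem stmt_18 (NB : Set ℕ) (mS : ℕ → ℕ) (qt : ℕ → ℕ → ℝ) (i : ℕ → ℕ)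
    (hmS : ∀ n, 1 ≤ n → 1 ≤ mS n)
    (hpos : ∀ n, 1 ≤ n → ∀ d, d ≤ mS n → 0 < qt d n)
    (hsum : ∀ n, 1 ≤ n → ∑ d ∈ Finset.range (mS n + 1), qt d n = 1)
    (hzero : ∀ d : ℕ → ℕ, (∀ j, 1 ≤ j → d j ≤ mS j) →
      Filter.Tendsto (fun n => prodQt qt d n) Filter.atTop (nhds 0))
    (hdig : ∀ n, 1 ≤ n → i n ≤ mS n) (m : ℕ) (hm : 1 ≤ m) :
    svQtSigma NB qt i m =
      svQtVal NB qt i / qt (i m) m -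
        sgn NB m * aQt qt (i m) m / qt (i m) m * prodQt qt i (m - 1) +
        (1 - 1 / qt (i m) m) *
          (∑ n ∈ Finset.Icc 1 (m - 1), sgn NB n * aQt qt (i n) n * prodQt qt i (n - 1)) := by
  have hsummable : Summable fun n => svQtTerm NB qt i (n + 1) :=
    summable_svQtTerm (fun n hn d hd => (hpos n hn d (hd.trans (hdig n hn))).le) fun n hn =>
      (aQt_mono (Nat.succ_le_succ (hdig n hn)) fun t ht =>
        (hpos n hn t (Nat.le_of_lt_succ ht)).le).trans_eq (hsum n hn)
  exact stmt_18_general NB qt i hsummable m hm (hpos m hm (i m) (hdig m hm)).ne'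
end
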